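/- arXiv:1108.2558 — 3 statements merged into one kernel-verified Lean document; each statement's English description precedes it below -/
import Mathlib

section
/- Let u : ℝⁿ → ℝ be continuous and define ũ : ℝ × ℝⁿ → ℝ by ũ(t,x) = u(x) for all (t,x). Then ũ is a viscosity sub-solution of the parabolic PDE ∂u/∂t + 𝓛u(t,x) + g(u(t,x), u_x(t,x)σ(x)) = 0 on ℝ × ℝⁿ if and only if u is a viscosity sub-solution of the elliptic PDE 𝓛u(x) + g(u(x), u_x(x)σ(x)) = 0 on ℝⁿ. -/
open MeasureTheory Matrix Finset

attribute [local instance] Matrix.frobeniusNormedAddCommGroup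

noncomputable section

/-- `ℝⁿ` as Euclidean space. -/
abbrev En (n : ℕ) := EuclideanSpace ℝ (Fin n)

/-- the `i`-th standard basis vector of `ℝⁿ`. -/
def ee (n : ℕ) (i : Fin n) : En n := EuclideanSpace.single i 1

/-- The partial derivative `∂φ/∂xᵢ (x)`. -/
def pd {n : ℕ} (φ : En n → ℝ) (i : Fin n) (x : En n) : ℝ :=
  fderiv ℝ φ x (ee n i)

/-- The second partial derivative `∂²φ/∂xᵢ∂xⱼ (x)`. -/
def pd2 {n : ℕ} (φ : En n → ℝ) (i j : Fin n) (x : En n) : ℝ :=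
  fderiv ℝ (fun y => pd φ j y) x (ee n i)

/-- The elliptic operator
`𝓛φ(x) = Σᵢ bᵢ(x) ∂φ/∂xᵢ(x) + (1/2) Σ_{i,j} (σ(x)σ(x)ᵀ)_{ij} ∂²φ/∂xᵢ∂xⱼ(x)`. -/
def Lop {n : ℕ} (b : En n → En n) (σ : En n → Matrix (Fin n) (Fin n) ℝ)
    (φ : En n → ℝ) (x : En n) : ℝ :=
  ∑ i, b x i * pd φ i x
    + (1 / 2) * ∑ i, ∑ j, (σ x * (σ x)ᵀ) i j * pd2 φ i j x

/-- The spatial gradient of `φ` at `x`, viewed as a row vector, multiplied by the matrix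
`σ(x)`; this is `φ_x(x) σ(x) ∈ ℝⁿ`. -/
def gradMul {n : ℕ} (σ : En n → Matrix (Fin n) (Fin n) ℝ) (φ : En n → ℝ) (x : En n) : En n :=
  (EuclideanSpace.equiv (Fin n) ℝ).symm (fun j => ∑ i, pd φ i x * σ x i j)

/-- `φ : ℝ × ℝⁿ → ℝ` is of class `C^{1,2}`: it is continuous, the time derivative `∂φ/∂t`
exists everywhere and is continuous, and the first and second spatial derivatives exist
everywhere and are continuous. -/
def C12 {n : ℕ} (φ : ℝ × En n → ℝ) : Prop :=
  Continuous φ ∧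
  (∀ p : ℝ × En n, DifferentiableAt ℝ (fun s => φ (s, p.2)) p.1) ∧
  Continuous (fun p : ℝ × En n => deriv (fun s => φ (s, p.2)) p.1) ∧
  (∀ p : ℝ × En n, DifferentiableAt ℝ (fun y => φ (p.1, y)) p.2) ∧
  Continuous (fun p : ℝ × En n => fderiv ℝ (fun y => φ (p.1, y)) p.2) ∧
  (∀ p : ℝ × En n, DifferentiableAt ℝ (fun y => fderiv ℝ (fun z => φ (p.1, z)) y) p.2) ∧
  Continuous (fun p : ℝ × En n => fderiv ℝ (fun y => fderiv ℝ (fun z => φ (p.1, z)) y) p.2)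

/-- `v : ℝ × ℝⁿ → ℝ` is a viscosity super-solution of the parabolic PDE
`∂u/∂t + 𝓛u + g(u, u_x σ) = 0` on `ℝ × ℝⁿ`. -/
def ParabolicSuperSol {n : ℕ} (g : ℝ × En n → ℝ) (b : En n → En n)
    (σ : En n → Matrix (Fin n) (Fin n) ℝ) (v : ℝ × En n → ℝ) : Prop :=
  ∀ (t : ℝ) (x : En n) (φ : ℝ × En n → ℝ), C12 φ → φ (t, x) = v (t, x) →
    (∀ p : ℝ × En n, φ p ≤ v p) →
    deriv (fun s => φ (s, x)) t + Lop b σ (fun y => φ (t, y)) x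
      + g (φ (t, x), gradMul σ (fun y => φ (t, y)) x) ≤ 0

/-- `v : ℝ × ℝⁿ → ℝ` is a viscosity sub-solution of the parabolic PDE
`∂u/∂t + 𝓛u + g(u, u_x σ) = 0` on `ℝ × ℝⁿ`. -/
def ParabolicSubSol {n : ℕ} (g : ℝ × En n → ℝ) (b : En n → En n)
    (σ : En n → Matrix (Fin n) (Fin n) ℝ) (v : ℝ × En n → ℝ) : Prop :=
  ∀ (t : ℝ) (x : En n) (φ : ℝ × En n → ℝ), C12 φ → φ (t, x) = v (t, x) →
    (∀ p : ℝ × En n, v p ≤ φ p) →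
    0 ≤ deriv (fun s => φ (s, x)) t + Lop b σ (fun y => φ (t, y)) x
      + g (φ (t, x), gradMul σ (fun y => φ (t, y)) x)

/-- `w : ℝⁿ → ℝ` is a viscosity super-solution of the elliptic PDE
`𝓛u + g(u, u_x σ) = 0` on `ℝⁿ`. -/
def EllipticSuperSol {n : ℕ} (g : ℝ × En n → ℝ) (b : En n → En n)
    (σ : En n → Matrix (Fin n) (Fin n) ℝ) (w : En n → ℝ) : Prop :=
  ∀ (x : En n) (φ : En n → ℝ), ContDiff ℝ 2 φ → φ x = w x → (∀ y, φ y ≤ w y) →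
    Lop b σ φ x + g (φ x, gradMul σ φ x) ≤ 0

/-- `w : ℝⁿ → ℝ` is a viscosity sub-solution of the elliptic PDE
`𝓛u + g(u, u_x σ) = 0` on `ℝⁿ`. -/
def EllipticSubSol {n : ℕ} (g : ℝ × En n → ℝ) (b : En n → En n)
    (σ : En n → Matrix (Fin n) (Fin n) ℝ) (w : En n → ℝ) : Prop :=
  ∀ (x : En n) (φ : En n → ℝ), ContDiff ℝ 2 φ → φ x = w x → (∀ y, w y ≤ φ y) →
    0 ≤ Lop b σ φ x + g (φ x, gradMul σ φ x)

end

/-!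
A test function touching `u` from above at `x`, extended constantly in time, touches `ũ` from above
at `(0, x)`, and its time derivative vanishes. Conversely, if `φ` touches `ũ` from above at
`(t, x)`, then `s ↦ φ (s, x)` is minimal at `t` because `ũ` does not depend on time, so
`∂φ/∂t (t, x) = 0` and only the slice `φ (t, ·)`, which touches `u` from above at `x`, matters.
-/

theorem contDiff_two_iff_fderiv {𝕜 E F : Type*} [NontriviallyNormedField 𝕜]
    [NormedAddCommGroup E] [NormedSpace 𝕜 E] [NormedAddCommGroup F] [NormedSpace 𝕜 F]
    {f : E → F} :
    ContDiff 𝕜 2 f ↔ Differentiable 𝕜 f ∧ Differentiable 𝕜 (fderiv 𝕜 f) ∧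
      Continuous (fderiv 𝕜 (fderiv 𝕜 f)) := by
  rw [← one_add_one_eq_two, contDiff_succ_iff_fderiv, contDiff_one_iff_fderiv]
  simp

section

variable {n : ℕ}

theorem C12.contDiff_slice {φ : ℝ × En n → ℝ} (hφ : C12 φ) (t : ℝ) :
    ContDiff ℝ 2 (fun y => φ (t, y)) := by
  obtain ⟨-, -, -, hdiff, -, hdiff_fderiv, hcont⟩ := hφ
  exact contDiff_two_iff_fderiv.2 ⟨fun y => hdiff (t, y), fun y => hdiff_fderiv (t, y),
    hcont.comp (Continuous.prodMk_right t)⟩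

theorem C12.comp_snd {φ : En n → ℝ} (hφ : ContDiff ℝ 2 φ) :
    C12 (fun p : ℝ × En n => φ p.2) := by
  obtain ⟨hdiff, hdiff_fderiv, hcont⟩ := contDiff_two_iff_fderiv.1 hφ
  have hderiv_time : Continuous fun p : ℝ × En n => deriv (fun _ : ℝ => φ p.2) p.1 := by
    simpa only [deriv_const] using continuous_const
  exact ⟨hφ.continuous.comp continuous_snd, fun p => differentiableAt_const (φ p.2), hderiv_time,
    fun p => hdiff p.2, hdiff_fderiv.continuous.comp continuous_snd, fun p => hdiff_fderiv p.2,
    hcont.comp continuous_snd⟩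

variable {b : En n → En n} {σ : En n → Matrix (Fin n) (Fin n) ℝ} {g : ℝ × En n → ℝ}
  {u : En n → ℝ}

theorem ParabolicSubSol.ellipticSubSol (h : ParabolicSubSol g b σ (fun p => u p.2)) :
    EllipticSubSol g b σ u := by
  intro x φ hφ heq hle
  simpa only [deriv_const, zero_add] using
    h 0 x (fun p => φ p.2) (C12.comp_snd hφ) heq (fun p => hle p.2)

theorem EllipticSubSol.parabolicSubSol (h : EllipticSubSol g b σ u) :
    ParabolicSubSol g b σ (fun p => u p.2) := by
  intro t x φ hφ heq hle
  have hmin : IsLocalMin (fun s => φ (s, x)) t :=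
    .of_forall fun s => heq.trans_le (hle (s, x))
  rw [hmin.deriv_eq_zero, zero_add]
  exact h x (fun y => φ (t, y)) (hφ.contDiff_slice t) heq (fun y => hle (t, y))

end

theorem parabolic_subSol_iff_elliptic_subSol_general {n : ℕ}
    (b : En n → En n) (σ : En n → Matrix (Fin n) (Fin n) ℝ) (g : ℝ × En n → ℝ) (u : En n → ℝ) :
    ParabolicSubSol g b σ (fun p => u p.2) ↔ EllipticSubSol g b σ u :=
  ⟨ParabolicSubSol.ellipticSubSol, EllipticSubSol.parabolicSubSol⟩

/-- **Lemma 2, sub-solution case.** `ũ(t,x) := u(x)` is a viscosity sub-solution of the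
parabolic PDE `∂u/∂t + 𝓛u + g(u, u_x σ) = 0` if and only if `u` is a viscosity
sub-solution of the elliptic PDE `𝓛u + g(u, u_x σ) = 0`. -/
theorem parabolic_subSol_iff_elliptic_subSol {n : ℕ}
    (b : En n → En n) (σ : En n → Matrix (Fin n) (Fin n) ℝ)
    (hbσ : ∃ C > 0, ∀ x₁ x₂ : En n, ‖b x₁ - b x₂‖ + ‖σ x₁ - σ x₂‖ ≤ C * ‖x₁ - x₂‖)
    (g : ℝ × En n → ℝ) (hg0 : ∀ y : ℝ, g (y, 0) = 0)
    (hgLip : ∃ C > 0, ∀ (y₁ y₂ : ℝ) (z₁ z₂ : En n),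
      |g (y₁, z₁) - g (y₂, z₂)| ≤ C * (|y₁ - y₂| + ‖z₁ - z₂‖))
    (u : En n → ℝ) (hu : Continuous u) :
    ParabolicSubSol g b σ (fun p => u p.2) ↔ EllipticSubSol g b σ u :=
  parabolic_subSol_iff_elliptic_subSol_general b σ g u
end

section
/- Let u : ℝⁿ → ℝ be continuous and of polynomial growth (there exist C > 0 and k ∈ ℕ with |u(y)| ≤ C(1 + |y|^k) for all y). Suppose that for every x ∈ ℝⁿ there is a Brownian motion (B^x_t)_{t≥0} started at x such that (u(B^x_t))_{t≥0} is a martingale with respect to the natural filtration σ(B^x_s : s ≤ t). Then u is infinitely differentiable and harmonic on ℝⁿ, i.e. Δu(y) = Σᵢ ∂²u/∂yᵢ²(y) = 0 for all y ∈ ℝⁿ. -/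
open MeasureTheory ProbabilityTheory Finset
open scoped NNReal

noncomputable section

/-- The Laplacian `Δu(y) = Σᵢ ∂²u/∂yᵢ²(y)`. -/
def laplacian {n : ℕ} (u : En n → ℝ) (y : En n) : ℝ :=
  ∑ i, fderiv ℝ (fun z => fderiv ℝ u z (ee n i)) y (ee n i)

/-- An `ℝⁿ`-valued process `(B_t)_{t ≥ 0}` on a probability space `(Ω, 𝓕, P)` is a
Brownian motion started at `x ∈ ℝⁿ` if `B₀ = x` a.s., a.e. sample path is continuous,
and for all `0 ≤ s ≤ t` the increment `B_t − B_s` is independent of `σ(B_r : r ≤ s)`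
and its `n` coordinates are independent real Gaussians with mean `0` and variance `t − s`. -/
structure IsBrownianMotion {n : ℕ} {Ω : Type*} [MeasurableSpace Ω] (P : Measure Ω)
    (x : En n) (B : ℝ≥0 → Ω → En n) : Prop where
  stronglyMeasurable : ∀ t, StronglyMeasurable (B t)
  start : ∀ᵐ ω ∂P, B 0 ω = x
  path_continuous : ∀ᵐ ω ∂P, Continuous fun t => B t ω
  indep_increments : ∀ s t : ℝ≥0, s ≤ t →
    ProbabilityTheory.Indep
      (MeasurableSpace.comap (fun ω => B t ω - B s ω)
        (inferInstance : MeasurableSpace (En n)))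
      (⨆ r ∈ Set.Iic s, MeasurableSpace.comap (B r)
        (inferInstance : MeasurableSpace (En n))) P
  gaussian_increments : ∀ s t : ℝ≥0, s ≤ t →
    Measure.map (fun ω => fun i : Fin n => B t ω i - B s ω i) P
      = Measure.pi (fun _ : Fin n => gaussianReal 0 (t - s))

/-- The Gaussian probability measure `N(x, t·Id)` on `ℝⁿ` with mean `x` and covariance
matrix `t·Id`, i.e. the product of `n` one-dimensional Gaussian measures with means `xᵢ`
and common variance `t`. -/
def gaussN {n : ℕ} (x : En n) (t : ℝ≥0) : Measure (En n) :=
  (Measure.pi fun i : Fin n => gaussianReal (x i) t).map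
    ⇑(EuclideanSpace.equiv (Fin n) ℝ).symm

end

/-!
At each time `t > 0` the martingale property says that `u x` is the average of `u` over the
Gaussian measure centred at `x` with variance `t`. So the weights `exp (-s ‖x - y‖²)`, `s > 0`,
annihilate `u - u x`; they are the powers of a single function of the distance to `x`, and the
Weierstrass approximation theorem upgrades them to all continuous compactly supported radial
weights. For a smooth radial bump `φ` of integral one this reads `u ⋆ φ = u`, hence `u` is smooth.
Moreover `Δu = u ⋆ Δφ`, and as `Δφ` is radial as well, this is `u` times the integral of `Δφ`.
Applied to `u = 1`, the same identity shows that the integral of `Δφ` vanishes.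
-/

open scoped Convolution Polynomial Topology

section Weierstrass

variable {α : Type*} [MeasurableSpace α] {μ : Measure α} {w q : α → ℝ} {a b : ℝ}

theorem integrable_mul_comp_of_mem_Icc (hw : Integrable w μ) (hq : AEMeasurable q μ)
    (hab : ∀ᵐ y ∂μ, q y ∈ Set.Icc a b) {g : ℝ → ℝ} (hg : Continuous g) :
    Integrable (fun y => w y * g (q y)) μ := by
  obtain ⟨C, hC⟩ := isCompact_Icc.exists_bound_of_continuousOn (hg.continuousOn (s := Set.Icc a b))
  exact hw.mul_bdd (c := C) (hg.measurable.comp_aemeasurable hq).aestronglyMeasurable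
    (hab.mono fun y hy => hC _ hy)

theorem integral_mul_eval_eq_zero_of_forall_pow (hw : Integrable w μ) (hq : AEMeasurable q μ)
    (hab : ∀ᵐ y ∂μ, q y ∈ Set.Icc a b) (hpow : ∀ m : ℕ, ∫ y, w y * q y ^ m ∂μ = 0) (p : ℝ[X]) :
    ∫ y, w y * p.eval (q y) ∂μ = 0 := by
  have hint (r : ℝ[X]) := integrable_mul_comp_of_mem_Icc hw hq hab r.continuous
  induction p using Polynomial.induction_on' with
  | add r s hr hs =>
    simp only [Polynomial.eval_add, mul_add]
    rw [integral_add (hint r) (hint s), hr, hs, add_zero]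
  | monomial m c =>
    simp only [Polynomial.eval_monomial, mul_left_comm _ c]
    rw [integral_const_mul, hpow, mul_zero]

theorem integral_mul_comp_eq_zero_of_forall_pow (hw : Integrable w μ) (hq : AEMeasurable q μ)
    (hab : ∀ᵐ y ∂μ, q y ∈ Set.Icc a b) (hpow : ∀ m : ℕ, ∫ y, w y * q y ^ m ∂μ = 0)
    {g : ℝ → ℝ} (hg : Continuous g) : ∫ y, w y * g (q y) ∂μ = 0 := by
  have hsmall : ∀ ε > 0, ‖∫ y, w y * g (q y) ∂μ‖ ≤ ε * ∫ y, ‖w y‖ ∂μ := by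
    intro ε hε
    obtain ⟨p, hp⟩ := exists_polynomial_near_of_continuousOn a b g hg.continuousOn ε hε
    have hsub : ∫ y, w y * g (q y) ∂μ = ∫ y, w y * (g (q y) - p.eval (q y)) ∂μ := by
      simp only [mul_sub]
      rw [integral_sub (integrable_mul_comp_of_mem_Icc hw hq hab hg)
        (integrable_mul_comp_of_mem_Icc hw hq hab p.continuous),
        integral_mul_eval_eq_zero_of_forall_pow hw hq hab hpow, sub_zero]
    rw [hsub, ← integral_const_mul]
    refine norm_integral_le_of_norm_le (hw.norm.const_mul ε) (hab.mono fun y hy => ?_)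
    rw [norm_mul, mul_comm, Real.norm_eq_abs (_ - _), abs_sub_comm]
    exact mul_le_mul_of_nonneg_right (hp _ hy).le (norm_nonneg _)
  have hlim : Filter.Tendsto (fun ε : ℝ => ε * ∫ y, ‖w y‖ ∂μ) (𝓝[>] 0) (𝓝 0) := by
    simpa using (Filter.tendsto_id.mul_const (∫ y, ‖w y‖ ∂μ)).mono_left
      (nhdsWithin_le_nhds (a := (0 : ℝ)))
  exact norm_le_zero_iff.1 (ge_of_tendsto hlim (eventually_mem_nhdsWithin.mono hsmall))

end Weierstrass

section Density

theorem pi_withDensity_ofReal {ι : Type*} [Fintype ι] {α : ι → Type*}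
    [∀ i, MeasurableSpace (α i)] (μ : ∀ i, Measure (α i)) [∀ i, SigmaFinite (μ i)]
    {f : ∀ i, α i → ℝ} (hf : ∀ i, Integrable (f i) (μ i)) (hf₀ : ∀ i a, 0 ≤ f i a) :
    Measure.pi (fun i => (μ i).withDensity fun a => ENNReal.ofReal (f i a)) =
      (Measure.pi μ).withDensity fun x => ENNReal.ofReal (∏ i, f i (x i)) := by
  refine Measure.pi_eq fun s hs => ?_
  rw [withDensity_apply _ (.univ_pi hs), Measure.restrict_pi_pi,
    ← ofReal_integral_eq_lintegral_ofReal (.fintype_prod_dep fun i => (hf i).restrict)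
      (.of_forall fun x => Finset.prod_nonneg fun i _ => hf₀ i _),
    integral_fintype_prod_eq_prod,
    ENNReal.ofReal_prod_of_nonneg fun i _ => integral_nonneg (hf₀ i)]
  refine Finset.prod_congr rfl fun i _ => ?_
  rw [withDensity_apply _ (hs i),
    ofReal_integral_eq_lintegral_ofReal (hf i).restrict (.of_forall (hf₀ i))]

theorem map_withDensity_comp {α β : Type*} [MeasurableSpace α] [MeasurableSpace β]
    (μ : Measure α) {e : α → β} (he : Measurable e) {f : β → ENNReal} (hf : Measurable f) :
    (μ.withDensity (f ∘ e)).map e = (μ.map e).withDensity f := by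
  ext s hs
  rw [Measure.map_apply he hs, withDensity_apply _ (he hs), withDensity_apply _ hs,
    setLIntegral_map hs hf he]
  rfl

end Density

section NormSq

theorem hasCompactSupport_comp_norm_sq {E : Type*} [NormedAddCommGroup E] [ProperSpace E]
    {k : ℝ → ℝ} (hk : HasCompactSupport k) : HasCompactSupport fun y : E => k (‖y‖ ^ 2) := by
  rw [hasCompactSupport_iff_eventuallyEq, Filter.coclosedCompact_eq_cocompact] at hk ⊢
  exact (((Filter.tendsto_pow_atTop two_ne_zero).comp tendsto_norm_cocompact_atTop).mono_right
    atTop_le_cocompact).eventually hk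

theorem contDiff_comp_norm_sq {E : Type*} [NormedAddCommGroup E] [InnerProductSpace ℝ E]
    {m : WithTop ℕ∞} {k : ℝ → ℝ} (hk : ContDiff ℝ m k) : ContDiff ℝ m fun y : E => k (‖y‖ ^ 2) :=
  hk.comp (contDiff_norm_sq ℝ)

theorem fderiv_comp_norm_sq_apply {E : Type*} [NormedAddCommGroup E] [InnerProductSpace ℝ E]
    {k : ℝ → ℝ} (hk : Differentiable ℝ k) (y v : E) :
    fderiv ℝ (fun y => k (‖y‖ ^ 2)) y v = 2 * (deriv k (‖y‖ ^ 2) * inner ℝ v y) := by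
  have h : HasFDerivAt (fun y => k (‖y‖ ^ 2)) _ y :=
    (hk _).hasDerivAt.comp_hasFDerivAt y (hasStrictFDerivAt_norm_sq y).hasFDerivAt
  rw [h.fderiv, smul_apply, smul_apply, coe_innerSL_apply, real_inner_comm,
    nsmul_eq_mul, smul_eq_mul, Nat.cast_ofNat, mul_left_comm]

theorem fderiv_fderiv_comp_norm_sq_apply {E : Type*} [NormedAddCommGroup E]
    [InnerProductSpace ℝ E] {k : ℝ → ℝ} (hk : ContDiff ℝ 2 k) (y v : E) :
    fderiv ℝ (fun z => fderiv ℝ (fun y => k (‖y‖ ^ 2)) z v) y v =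
      2 * deriv k (‖y‖ ^ 2) * ‖v‖ ^ 2 + 4 * deriv (deriv k) (‖y‖ ^ 2) * inner ℝ v y ^ 2 := by
  have hk' : ContDiff ℝ 1 (deriv k) := ((contDiff_succ_iff_deriv (n := 1)).1 hk).2.2
  have hd : DifferentiableAt ℝ (fun z : E => deriv k (‖z‖ ^ 2)) y :=
    (contDiff_comp_norm_sq hk').differentiable one_ne_zero y
  have hinner : HasFDerivAt (fun z => inner ℝ v z) (innerSL ℝ v) y := (innerSL ℝ v).hasFDerivAt
  simp_rw [fderiv_comp_norm_sq_apply (hk.differentiable two_ne_zero)]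
  rw [fderiv_const_mul (hd.fun_mul hinner.differentiableAt),
    fderiv_fun_mul hd hinner.differentiableAt, hinner.fderiv]
  simp only [smul_apply, add_apply, smul_eq_mul, coe_innerSL_apply, real_inner_self_eq_norm_sq,
    fderiv_comp_norm_sq_apply (hk'.differentiable one_ne_zero)]
  ring

theorem exists_contDiff_hasCompactSupport_integral_comp_norm_sq_eq_one (E : Type*)
    [NormedAddCommGroup E] [ProperSpace E] [MeasurableSpace E] [OpensMeasurableSpace E]
    (μ : Measure E) [μ.IsOpenPosMeasure] [IsFiniteMeasureOnCompacts μ] :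
    ∃ k : ℝ → ℝ, ContDiff ℝ (⊤ : ℕ∞) k ∧ HasCompactSupport k ∧ ∫ y, k (‖y‖ ^ 2) ∂μ = 1 := by
  let b : ContDiffBump (0 : ℝ) := default
  have hpos : 0 < ∫ y, b (‖y‖ ^ 2) ∂μ := by
    refine Continuous.integral_pos_of_hasCompactSupport_nonneg_nonzero (x := 0)
      (b.continuous.comp (by fun_prop)) (hasCompactSupport_comp_norm_sq b.hasCompactSupport)
      (fun y => b.nonneg) ?_
    simp [b.eventuallyEq_one.eq_of_nhds]
  refine ⟨fun r => (∫ y, b (‖y‖ ^ 2) ∂μ)⁻¹ * b r, contDiff_const.mul b.contDiff,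
    b.hasCompactSupport.mul_left, ?_⟩
  rw [integral_const_mul, inv_mul_cancel₀ hpos.ne']

end NormSq

section Laplacian

theorem fderiv_convolution_apply {G E E' F : Type*} [NormedAddCommGroup G] [NormedSpace ℝ G]
    [MeasurableSpace G] [BorelSpace G] [NormedAddCommGroup E] [NormedSpace ℝ E]
    [NormedAddCommGroup E'] [NormedSpace ℝ E'] [NormedAddCommGroup F] [NormedSpace ℝ F]
    (L : E →L[ℝ] E' →L[ℝ] F) {μ : Measure G} [SFinite μ] [μ.IsAddLeftInvariant] {f : G → E}
    {g : G → E'} (hf : LocallyIntegrable f μ) (hg : ContDiff ℝ 1 g) (hgc : HasCompactSupport g)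
    (x v : G) : fderiv ℝ (f ⋆[L, μ] g) x v = (f ⋆[L, μ] fun y => fderiv ℝ g y v) x := by
  rw [(hgc.hasFDerivAt_convolution_right L hf hg x).fderiv]
  exact convolution_precompR_apply L hf (hgc.fderiv ℝ) (hg.continuous_fderiv one_ne_zero) x v

variable {n : ℕ}

theorem laplacian_convolution {u φ : En n → ℝ} (hu : LocallyIntegrable u) (hφ : ContDiff ℝ 2 φ)
    (hφc : HasCompactSupport φ) (x : En n) : laplacian (u ⋆ φ) x = (u ⋆ laplacian φ) x := by
  have hd (i : Fin n) : ContDiff ℝ 1 fun y => fderiv ℝ φ y (ee n i) :=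
    (hφ.fderiv_right le_rfl).clm_apply contDiff_const
  have hdc (i : Fin n) : HasCompactSupport fun y => fderiv ℝ φ y (ee n i) :=
    hφc.fderiv_apply ℝ _
  have hdd (i : Fin n) : ConvolutionExistsAt u
      (fun y => fderiv ℝ (fun z => fderiv ℝ φ z (ee n i)) y (ee n i)) x (.lsmul ℝ ℝ) :=
    ((hdc i).fderiv_apply ℝ _).convolutionExists_right _ hu
      (((hd i).continuous_fderiv one_ne_zero).clm_apply continuous_const) x
  calc laplacian (u ⋆ φ) x
    _ = ∑ i, (u ⋆ fun y => fderiv ℝ (fun z => fderiv ℝ φ z (ee n i)) y (ee n i)) x := by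
      refine Finset.sum_congr rfl fun i _ => ?_
      simp_rw [fderiv_convolution_apply _ hu (hφ.of_le one_le_two) hφc]
      exact fderiv_convolution_apply _ hu (hd i) (hdc i) x _
    _ = (u ⋆ laplacian φ) x := by
      simp only [convolution_def, laplacian, map_sum]
      exact (integral_finsetSum _ fun i _ => hdd i).symm

theorem laplacian_const (c : ℝ) (x : En n) : laplacian (fun _ => c) x = 0 := by
  simp [laplacian]

theorem laplacian_comp_norm_sq {k : ℝ → ℝ} (hk : ContDiff ℝ 2 k) (y : En n) :
    laplacian (fun y => k (‖y‖ ^ 2)) y =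
      2 * n * deriv k (‖y‖ ^ 2) + 4 * ‖y‖ ^ 2 * deriv (deriv k) (‖y‖ ^ 2) := by
  have hnorm (i : Fin n) : ‖ee n i‖ = 1 := by simp [ee]
  have hinner (i : Fin n) : inner ℝ (ee n i) y = y i := by
    simp [ee, EuclideanSpace.inner_single_left]
  simp only [laplacian, fderiv_fderiv_comp_norm_sq_apply hk, hnorm, hinner,
    Finset.sum_add_distrib, ← Finset.mul_sum, ← EuclideanSpace.real_norm_sq_eq, one_pow, mul_one,
    sum_const, card_univ, Fintype.card_fin, nsmul_eq_mul]
  ring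

end Laplacian

section Gaussian

variable {n : ℕ} {x : En n} {t : ℝ≥0}

instance isProbabilityMeasure_gaussN : IsProbabilityMeasure (gaussN x t) :=
  Measure.isProbabilityMeasure_map (by fun_prop)

theorem prod_gaussianPDFReal (x y : En n) (t : ℝ≥0) :
    ∏ i, gaussianPDFReal (x i) t (y i) =
      (√(2 * Real.pi * t))⁻¹ ^ n * Real.exp (-((2 * (t : ℝ))⁻¹ * ‖x - y‖ ^ 2)) := by
  simp only [gaussianPDFReal_def]
  rw [Finset.prod_mul_distrib, Finset.prod_const, card_univ, Fintype.card_fin, ← Real.exp_sum,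
    EuclideanSpace.real_norm_sq_eq, Finset.mul_sum, ← Finset.sum_neg_distrib]
  congr! 3 with i
  rw [PiLp.sub_apply]
  ring

theorem gaussN_eq_withDensity (x : En n) (ht : t ≠ 0) :
    gaussN x t = volume.withDensity fun y => ENNReal.ofReal
      ((√(2 * Real.pi * t))⁻¹ ^ n * Real.exp (-((2 * (t : ℝ))⁻¹ * ‖x - y‖ ^ 2))) := by
  have hpi : Measure.pi (fun i => gaussianReal (x i) t) = volume.withDensity
      ((fun y : En n => ENNReal.ofReal (∏ i, gaussianPDFReal (x i) t (y i))) ∘ WithLp.toLp 2) := by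
    simp only [gaussianReal_of_var_ne_zero _ ht, gaussianPDF_def]
    exact pi_withDensity_ofReal _ (fun i => integrable_gaussianPDFReal _ _)
      (fun i => gaussianPDFReal_nonneg _ _)
  rw [gaussN, hpi]
  simp only [← prod_gaussianPDFReal]
  rw [← (PiLp.volume_preserving_toLp (Fin n)).map_eq]
  exact map_withDensity_comp _ (by fun_prop) (by fun_prop)

theorem integrable_gaussN_iff (ht : t ≠ 0) {f : En n → ℝ} :
    Integrable f (gaussN x t) ↔
      Integrable fun y => f y * Real.exp (-((2 * (t : ℝ))⁻¹ * ‖x - y‖ ^ 2)) := by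
  have hc : (√(2 * Real.pi * t))⁻¹ ^ n ≠ 0 := by positivity
  rw [gaussN_eq_withDensity x ht, integrable_withDensity_iff_integrable_smul' (by fun_prop)
    (.of_forall fun _ => ENNReal.ofReal_lt_top)]
  refine (integrable_congr (.of_forall fun y => ?_)).trans (integrable_const_mul_iff hc.isUnit _)
  rw [ENNReal.toReal_ofReal (by positivity), smul_eq_mul]
  ring

theorem integral_gaussN (ht : t ≠ 0) (f : En n → ℝ) :
    ∫ y, f y ∂gaussN x t = (√(2 * Real.pi * t))⁻¹ ^ n *
      ∫ y, f y * Real.exp (-((2 * (t : ℝ))⁻¹ * ‖x - y‖ ^ 2)) := by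
  rw [gaussN_eq_withDensity x ht, integral_withDensity_eq_integral_toReal_smul (by fun_prop)
    (.of_forall fun _ => ENNReal.ofReal_lt_top), ← integral_const_mul]
  refine integral_congr_ae (.of_forall fun y => ?_)
  dsimp only
  rw [ENNReal.toReal_ofReal (by positivity), smul_eq_mul]
  ring

theorem gaussN_absolutelyContinuous (x : En n) (ht : t ≠ 0) : gaussN x t ≪ volume := by
  rw [gaussN_eq_withDensity x ht]
  exact withDensity_absolutelyContinuous _ _

theorem map_const_add_gaussN_zero (x : En n) (t : ℝ≥0) :
    (gaussN 0 t).map (x + ·) = gaussN x t := by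
  have hpi : Measure.pi (fun i => gaussianReal (x i) t) =
      (Measure.pi fun _ : Fin n => gaussianReal 0 t).map (fun z i => x i + z i) := by
    rw [Measure.pi_map_pi (by fun_prop)]
    simp only [gaussianReal_map_const_add, zero_add]
  rw [gaussN, gaussN, hpi, Measure.map_map (by fun_prop) (by fun_prop),
    Measure.map_map (by fun_prop) (by fun_prop)]
  rfl

end Gaussian

namespace IsBrownianMotion

variable {n : ℕ} {Ω : Type*} [MeasurableSpace Ω] {P : Measure Ω} {x : En n} {B : ℝ≥0 → Ω → En n}
  {t : ℝ≥0} {u : En n → ℝ}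

theorem map_eq_gaussN (hB : IsBrownianMotion P x B) (t : ℝ≥0) : P.map (B t) = gaussN x t := by
  have hmeas (s : ℝ≥0) : Measurable (B s) := (hB.stronglyMeasurable s).measurable
  have hincr := hB.gaussian_increments 0 t zero_le
  rw [tsub_zero] at hincr
  have hBt : B t =ᵐ[P] (x + ·) ∘ WithLp.toLp 2 ∘ fun ω i => B t ω i - B 0 ω i := by
    filter_upwards [hB.start] with ω hω
    ext i
    simp [hω]
  rw [Measure.map_congr hBt, ← Measure.map_map (by fun_prop) (by fun_prop),
    ← Measure.map_map (by fun_prop) (by fun_prop), hincr, ← map_const_add_gaussN_zero]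
  rfl

theorem integrable_comp_iff (hB : IsBrownianMotion P x B)
    (hu : AEStronglyMeasurable u (gaussN x t)) :
    Integrable (fun ω => u (B t ω)) P ↔ Integrable u (gaussN x t) := by
  rw [← hB.map_eq_gaussN t] at hu ⊢
  exact (integrable_map_measure hu (hB.stronglyMeasurable t).measurable.aemeasurable).symm

theorem integral_comp (hB : IsBrownianMotion P x B)
    (hu : AEStronglyMeasurable u (gaussN x t)) :
    ∫ ω, u (B t ω) ∂P = ∫ y, u y ∂gaussN x t := by
  rw [← hB.map_eq_gaussN t] at hu ⊢
  exact (integral_map (hB.stronglyMeasurable t).measurable.aemeasurable hu).symm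

theorem integral_comp_eq_of_martingale [IsProbabilityMeasure P] (hB : IsBrownianMotion P x B)
    {ℱ : Filtration ℝ≥0 ‹MeasurableSpace Ω›} (hM : Martingale (fun t ω => u (B t ω)) ℱ P)
    (t : ℝ≥0) : ∫ ω, u (B t ω) ∂P = u x := by
  calc ∫ ω, u (B t ω) ∂P
    _ = ∫ ω, u (B 0 ω) ∂P := by
      simpa using (hM.setIntegral_eq (zero_le (a := t)) MeasurableSet.univ).symm
    _ = ∫ _, u x ∂P := integral_congr_ae (hB.start.mono fun _ h => congrArg u h)
    _ = u x := by simp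

end IsBrownianMotion

section GaussianMeanValue

variable {n : ℕ} {u : En n → ℝ}

theorem exists_two_mul_inv_eq {s : ℝ} (hs : 0 < s) : ∃ t : ℝ≥0, t ≠ 0 ∧ (2 * (t : ℝ))⁻¹ = s := by
  lift s to ℝ≥0 using hs.le
  refine ⟨(2 * s)⁻¹, inv_ne_zero (mul_ne_zero two_ne_zero (by simpa using hs.ne')), ?_⟩
  push_cast
  field_simp

/-- `u` is a fixed point of the heat semigroup: its average against every nondegenerate Gaussian
measure `N(x, t·Id)` is its value at the centre. -/
def HasGaussianMeanValue (u : En n → ℝ) : Prop :=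
  ∀ (x : En n) (t : ℝ≥0), t ≠ 0 → Integrable u (gaussN x t) ∧ ∫ y, u y ∂gaussN x t = u x

theorem HasGaussianMeanValue.integrable_mul_exp (hu : HasGaussianMeanValue u) (x : En n) {s : ℝ}
    (hs : 0 < s) : Integrable fun y => (u y - u x) * Real.exp (-(s * ‖x - y‖ ^ 2)) := by
  obtain ⟨t, ht, rfl⟩ := exists_two_mul_inv_eq hs
  exact (integrable_gaussN_iff ht).1 ((hu x t ht).1.sub (integrable_const (u x)))

theorem HasGaussianMeanValue.integral_mul_exp (hu : HasGaussianMeanValue u) (x : En n) {s : ℝ}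
    (hs : 0 < s) : ∫ y, (u y - u x) * Real.exp (-(s * ‖x - y‖ ^ 2)) = 0 := by
  obtain ⟨t, ht, rfl⟩ := exists_two_mul_inv_eq hs
  have hzero : ∫ y, (u y - u x) ∂gaussN x t = 0 := by
    rw [integral_sub (hu x t ht).1 (integrable_const _), (hu x t ht).2]
    simp
  rw [integral_gaussN ht] at hzero
  exact (mul_eq_zero.1 hzero).resolve_left (by positivity)

theorem HasGaussianMeanValue.locallyIntegrable (hu : HasGaussianMeanValue u) :
    LocallyIntegrable u := by
  have hint := (integrable_gaussN_iff one_ne_zero).1 (hu 0 1 one_ne_zero).1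
  have h := hint.locallyIntegrable.mul_continuous
    (g := fun y : En n => Real.exp ((2 * ((1 : ℝ≥0) : ℝ))⁻¹ * ‖0 - y‖ ^ 2)) (by fun_prop)
  simpa [mul_assoc, ← Real.exp_add] using h

end GaussianMeanValue

section RadialMeanValue

/-- The integral of `u` against any continuous compactly supported radial weight centred at `x`,
written as a convolution, is the one of the constant `u x`. The profile `k` is a function of the
squared distance, so that smooth profiles give smooth weights. -/
def HasRadialMeanValue {E : Type*} [NormedAddCommGroup E] [MeasureSpace E] (u : E → ℝ) : Prop :=
  ∀ k : ℝ → ℝ, Continuous k → HasCompactSupport k →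
    ∀ x : E, (u ⋆ fun y => k (‖y‖ ^ 2)) x = u x * ∫ y : E, k (‖y‖ ^ 2)

-- Calling the quotient `g z`, one has `k r = z * g z` for `z = exp (-r)`. Its junk value at `z = 0`
-- is the limit there.
theorem continuous_comp_neg_log_div {k : ℝ → ℝ} (hk : Continuous k) (hkc : HasCompactSupport k) :
    Continuous fun z => k (-Real.log z) / z := by
  refine continuous_iff_continuousAt.2 fun z => ?_
  rcases eq_or_ne z 0 with rfl | hz
  · have hlog : Filter.Tendsto (fun z => -Real.log z) (𝓝[≠] 0) (Filter.cocompact ℝ) :=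
      (Filter.tendsto_neg_atBot_atTop.comp Real.tendsto_log_nhdsNE_zero).mono_right
        atTop_le_cocompact
    have hk₀ : k =ᶠ[Filter.cocompact ℝ] 0 := by
      simpa [Filter.coclosedCompact_eq_cocompact] using hasCompactSupport_iff_eventuallyEq.1 hkc
    have hzero : (fun z => k (-Real.log z) / z) =ᶠ[𝓝[≠] 0] fun _ => 0 :=
      (hlog.eventually hk₀).mono fun z hz => by simp [hz]
    rw [continuousAt_iff_punctured_nhds]
    simpa using tendsto_const_nhds.congr' hzero.symm
  · exact (hk.continuousAt.comp (Real.continuousAt_log hz).neg).div continuousAt_id hz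

theorem HasGaussianMeanValue.hasRadialMeanValue {n : ℕ} {u : En n → ℝ}
    (hu : HasGaussianMeanValue u) : HasRadialMeanValue u := by
  intro k hk hkc x
  have hexp : ∀ y : En n, Real.exp (-‖x - y‖ ^ 2) ∈ Set.Icc 0 1 := fun y =>
    ⟨(Real.exp_pos _).le, Real.exp_le_one_iff.2 (by simp)⟩
  have hpow (m : ℕ) :
      ∫ y, (u y - u x) * Real.exp (-‖x - y‖ ^ 2) * Real.exp (-‖x - y‖ ^ 2) ^ m = 0 := by
    rw [← hu.integral_mul_exp x m.cast_add_one_pos]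
    congr! 2 with y
    rw [mul_assoc, ← Real.exp_nat_mul, ← Real.exp_add]
    ring_nf
  have hdiff : ∫ y, (u y - u x) * k (‖x - y‖ ^ 2) = 0 := by
    rw [← integral_mul_comp_eq_zero_of_forall_pow
      (by simpa using hu.integrable_mul_exp x one_pos) (by fun_prop) (.of_forall hexp) hpow
      (continuous_comp_neg_log_div hk hkc)]
    congr! 2 with y
    rw [Real.log_exp, neg_neg, mul_assoc, mul_div_cancel₀ _ (Real.exp_ne_zero _)]
  have hsupp : HasCompactSupport fun y => k (‖x - y‖ ^ 2) :=
    (hasCompactSupport_comp_norm_sq hkc).comp_homeomorph (Homeomorph.subLeft x)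
  have hcont : Continuous fun y => k (‖x - y‖ ^ 2) := by fun_prop
  have hint : Integrable fun y => u y * k (‖x - y‖ ^ 2) :=
    hu.locallyIntegrable.integrable_smul_right_of_hasCompactSupport hcont hsupp
  simp only [sub_mul] at hdiff
  rw [integral_sub hint ((hcont.integrable_of_hasCompactSupport hsupp).const_mul _), sub_eq_zero,
    integral_const_mul, integral_sub_left_eq_self (fun y => k (‖y‖ ^ 2))] at hdiff
  exact hdiff

namespace HasRadialMeanValue

section NormedAddCommGroup

variable {E : Type*} [NormedAddCommGroup E] [MeasureSpace E] [BorelSpace E]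

theorem const [(volume : Measure E).IsAddLeftInvariant] [(volume : Measure E).IsNegInvariant]
    (c : ℝ) : HasRadialMeanValue fun _ : E => c := by
  intro k _ _ x
  rw [← integral_sub_left_eq_self _ volume x, ← integral_const_mul]
  rfl

variable [ProperSpace E]

theorem exists_convolution_eq_self [(volume : Measure E).IsOpenPosMeasure]
    [IsFiniteMeasureOnCompacts (volume : Measure E)] {u : E → ℝ} (hu : HasRadialMeanValue u) :
    ∃ k : ℝ → ℝ, ContDiff ℝ (⊤ : ℕ∞) k ∧ HasCompactSupport k ∧
      u ⋆ (fun y => k (‖y‖ ^ 2)) = u := by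
  obtain ⟨k, hk, hkc, hk₁⟩ :=
    exists_contDiff_hasCompactSupport_integral_comp_norm_sq_eq_one E volume
  refine ⟨k, hk, hkc, funext fun x => ?_⟩
  rw [hu k hk.continuous hkc, hk₁, mul_one]

theorem contDiff [InnerProductSpace ℝ E] [(volume : Measure E).IsAddHaarMeasure] {u : E → ℝ}
    (hu : HasRadialMeanValue u) (hloc : LocallyIntegrable u) : ContDiff ℝ (⊤ : ℕ∞) u := by
  obtain ⟨k, hk, hkc, hself⟩ := hu.exists_convolution_eq_self
  rw [← hself]
  exact (hasCompactSupport_comp_norm_sq hkc).contDiff_convolution_right _ hloc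
    (contDiff_comp_norm_sq hk)

end NormedAddCommGroup

variable {n : ℕ} {u : En n → ℝ}

theorem laplacian_convolution_comp_norm_sq (hu : HasRadialMeanValue u)
    (hloc : LocallyIntegrable u) {k : ℝ → ℝ} (hk : ContDiff ℝ 2 k) (hkc : HasCompactSupport k)
    (x : En n) : laplacian (u ⋆ fun y => k (‖y‖ ^ 2)) x =
      u x * ∫ y : En n, laplacian (fun y => k (‖y‖ ^ 2)) y := by
  have hk' : ContDiff ℝ 1 (deriv k) := ((contDiff_succ_iff_deriv (n := 1)).1 hk).2.2
  have hderiv : Continuous (deriv k) := hk'.continuous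
  have hderiv₂ : Continuous (deriv (deriv k)) := hk'.continuous_deriv le_rfl
  rw [laplacian_convolution hloc (contDiff_comp_norm_sq hk)
    (hasCompactSupport_comp_norm_sq hkc), funext (laplacian_comp_norm_sq hk)]
  exact hu (fun r => 2 * n * deriv k r + 4 * r * deriv (deriv k) r)
    ((hderiv.const_mul _).add ((continuous_const_mul 4).mul hderiv₂))
    (hkc.deriv.mul_left.add hkc.deriv.deriv.mul_left) x

end HasRadialMeanValue

-- The constant function `1` has the radial mean value property and vanishing Laplacian.
theorem integral_laplacian_comp_norm_sq {n : ℕ} {k : ℝ → ℝ} (hk : ContDiff ℝ 2 k)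
    (hkc : HasCompactSupport k) : ∫ y : En n, laplacian (fun y => k (‖y‖ ^ 2)) y = 0 := by
  have hone : HasRadialMeanValue fun _ : En n => (1 : ℝ) := .const 1
  have h := hone.laplacian_convolution_comp_norm_sq (locallyIntegrable_const 1) hk hkc 0
  rw [one_mul, funext (hone k hk.continuous hkc), laplacian_const] at h
  exact h.symm

theorem HasRadialMeanValue.laplacian_eq_zero {n : ℕ} {u : En n → ℝ} (hu : HasRadialMeanValue u)
    (hloc : LocallyIntegrable u) (x : En n) : laplacian u x = 0 := by
  obtain ⟨k, hk, hkc, hself⟩ := hu.exists_convolution_eq_self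
  have hk₂ : ContDiff ℝ 2 k := contDiff_infty.1 hk 2
  rw [← hself, hu.laplacian_convolution_comp_norm_sq hloc hk₂ hkc,
    integral_laplacian_comp_norm_sq hk₂ hkc, mul_zero]

end RadialMeanValue

theorem martingale_implies_harmonic_general {n : ℕ} {u : En n → ℝ} (hu : AEStronglyMeasurable u)
    (hmart : ∀ x : En n, ∃ (Ω : Type*) (_ : MeasurableSpace Ω) (P : Measure Ω)
      (_ : IsProbabilityMeasure P) (B : ℝ≥0 → Ω → En n) (_ : IsBrownianMotion P x B)
      (ℱ : Filtration ℝ≥0 ‹_›), Martingale (fun t ω => u (B t ω)) ℱ P) :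
    ContDiff ℝ (⊤ : ℕ∞) u ∧ ∀ y, laplacian u y = 0 := by
  have hgauss : HasGaussianMeanValue u := by
    intro x t ht
    obtain ⟨Ω, _, P, _, B, hB, ℱ, hM⟩ := hmart x
    have hux : AEStronglyMeasurable u (gaussN x t) :=
      hu.mono_ac (gaussN_absolutelyContinuous x ht)
    exact ⟨(hB.integrable_comp_iff hux).1 (hM.integrable t),
      (hB.integral_comp hux).symm.trans (hB.integral_comp_eq_of_martingale hM t)⟩
  have hloc : LocallyIntegrable u := hgauss.locallyIntegrable
  have hrad : HasRadialMeanValue u := hgauss.hasRadialMeanValue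
  exact ⟨hrad.contDiff hloc, hrad.laplacian_eq_zero hloc⟩

/-- **Converse: the martingale property forces harmonicity.**
If `u : ℝⁿ → ℝ` is continuous, of polynomial growth, and for every `x ∈ ℝⁿ` there is a
Brownian motion `(B^x_t)` started at `x` such that `(u(B^x_t))` is a martingale with
respect to its natural filtration, then `u` is infinitely differentiable and harmonic. -/
theorem martingale_implies_harmonic {n : ℕ} (hn : 1 ≤ n)
    (u : En n → ℝ) (hu : Continuous u)
    (hgrowth : ∃ C > 0, ∃ k : ℕ, ∀ y, |u y| ≤ C * (1 + ‖y‖ ^ k))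
    (hmart : ∀ x : En n, ∃ (Ω : Type) (_ : MeasurableSpace Ω)
      (P : MeasureTheory.Measure Ω) (_ : MeasureTheory.IsProbabilityMeasure P)
      (B : ℝ≥0 → Ω → En n) (hB : IsBrownianMotion P x B),
      MeasureTheory.Martingale (fun t ω => u (B t ω))
        (MeasureTheory.Filtration.natural B hB.stronglyMeasurable) P) :
    ContDiff ℝ (⊤ : ℕ∞) u ∧ ∀ y, laplacian u y = 0 :=
  martingale_implies_harmonic_general hu.aestronglyMeasurable fun x =>
    let ⟨Ω, _, P, hP, B, hB, hM⟩ := hmart x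
    ⟨Ω, _, P, hP, B, hB, _, hM⟩
end

section
/- Let u : ℝⁿ → ℝ be continuous and of polynomial growth (there exist C > 0 and k ∈ ℕ with |u(y)| ≤ C(1 + |y|^k) for all y). If for every x ∈ ℝⁿ and every t > 0 one has ∫_{ℝⁿ} u(y) dN(x, t·Id)(y) = u(x), then u is infinitely differentiable and harmonic on ℝⁿ, i.e. Δu(y) = Σᵢ ∂²u/∂yᵢ²(y) = 0 for all y ∈ ℝⁿ. -/
open MeasureTheory ProbabilityTheory Finset
open scoped NNReal

/-!
By the Cameron–Martin formula, the mean value property at time `1` reads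
`u x = exp (-‖x‖² / 2) * ∫ exp ⟪x, z⟫ * u z dγ(z)` with `γ` the standard Gaussian measure. The
integral is a Laplace transform, which can be differentiated under the integral sign indefinitely,
so `u` is smooth. Since `γ` is centred with identity covariance, integrating the second-order Taylor
expansion of `u` at `x` gives `∫ u (x + s z) dγ(z) = u x + s² / 2 * Δ u x + o(s²)`; the mean value
property along any times `s → 0` therefore forces `Δ u x = 0`.
-/

open Filter Topology Asymptotics
open scoped ContDiff InnerProductSpace Laplacian

variable {E F G : Type*} [NormedAddCommGroup E] [NormedAddCommGroup F] [NormedAddCommGroup G]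

/-- A function of at most exponential growth. No sign is imposed on `C` and `a`. -/
def HasExpGrowth (f : E → F) : Prop :=
  ∃ C a : ℝ, ∀ y, ‖f y‖ ≤ C * Real.exp (a * ‖y‖)

namespace HasExpGrowth

lemma exists_nonneg {f : E → F} (hf : HasExpGrowth f) :
    ∃ C a : ℝ, 0 ≤ C ∧ 0 ≤ a ∧ ∀ y, ‖f y‖ ≤ C * Real.exp (a * ‖y‖) := by
  obtain ⟨C, a, h⟩ := hf
  refine ⟨|C|, |a|, abs_nonneg C, abs_nonneg a, fun y => (h y).trans ?_⟩
  gcongr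
  · exact le_abs_self C
  · exact le_abs_self a

lemma of_norm_le_one_add_pow {f : E → F} {C : ℝ} {k : ℕ} (hf : ∀ y, ‖f y‖ ≤ C * (1 + ‖y‖ ^ k)) :
    HasExpGrowth f := by
  have hpow (y : E) : 1 + ‖y‖ ^ k ≤ (1 + k.factorial) * Real.exp (1 * ‖y‖) := by
    have hone : 1 ≤ Real.exp ‖y‖ := Real.one_le_exp (norm_nonneg y)
    have hfactorial := Real.pow_div_factorial_le_exp ‖y‖ (norm_nonneg y) k
    rw [div_le_iff₀ (by positivity)] at hfactorial
    rw [one_mul]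
    linarith
  have hC : 0 ≤ C := nonneg_of_mul_nonneg_left ((norm_nonneg _).trans (hf 0)) (by positivity)
  refine ⟨C * (1 + k.factorial), 1, fun y => (hf y).trans ?_⟩
  rw [mul_assoc]
  exact mul_le_mul_of_nonneg_left (hpow y) hC

lemma of_norm_le_pow {f : E → F} {C : ℝ} {k : ℕ} (hf : ∀ y, ‖f y‖ ≤ C * ‖y‖ ^ k) :
    HasExpGrowth f := by
  refine of_norm_le_one_add_pow (C := |C|) (k := k) fun y => (hf y).trans ?_
  gcongr
  · exact le_abs_self C
  · simp

lemma const (c : F) : HasExpGrowth fun _ : E => c :=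
  of_norm_le_pow (C := ‖c‖) (k := 0) fun _ => by simp

lemma sub {f g : E → F} (hf : HasExpGrowth f) (hg : HasExpGrowth g) :
    HasExpGrowth fun y => f y - g y := by
  obtain ⟨C, a, hC, -, hf⟩ := hf.exists_nonneg
  obtain ⟨D, b, hD, -, hg⟩ := hg.exists_nonneg
  refine ⟨C + D, max a b, fun y => ?_⟩
  calc ‖f y - g y‖ ≤ C * Real.exp (a * ‖y‖) + D * Real.exp (b * ‖y‖) :=
        (norm_sub_le _ _).trans (add_le_add (hf y) (hg y))
    _ ≤ (C + D) * Real.exp (max a b * ‖y‖) := by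
        rw [add_mul]
        gcongr
        · exact le_max_left a b
        · exact le_max_right a b

lemma comp_add_smul [NormedSpace ℝ E] {f : E → F} (hf : HasExpGrowth f) (x : E) (s : ℝ) :
    HasExpGrowth fun y => f (x + s • y) := by
  obtain ⟨C, a, hC, ha, hf⟩ := hf.exists_nonneg
  refine ⟨C * Real.exp (a * ‖x‖), a * |s|, fun y => (hf _).trans ?_⟩
  have hnorm : ‖x + s • y‖ ≤ ‖x‖ + |s| * ‖y‖ := by
    simpa only [norm_smul, Real.norm_eq_abs] using norm_add_le x (s • y)
  calc C * Real.exp (a * ‖x + s • y‖) ≤ C * Real.exp (a * (‖x‖ + |s| * ‖y‖)) := by gcongr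
    _ = C * Real.exp (a * ‖x‖) * Real.exp (a * |s| * ‖y‖) := by
        rw [mul_add, Real.exp_add]; ring_nf

lemma clm [NormedSpace ℝ E] [NormedSpace ℝ F] (L : E →L[ℝ] F) : HasExpGrowth L :=
  of_norm_le_pow (k := 1) fun h => by simpa using L.le_opNorm h

lemma clm_apply_self [NormedSpace ℝ E] [NormedSpace ℝ F]
    (B : E →L[ℝ] E →L[ℝ] F) : HasExpGrowth fun h => B h h :=
  of_norm_le_pow (k := 2) fun h => by simpa [sq, mul_assoc] using B.le_opNorm₂ h h

lemma exists_norm_le_sq_mul_exp {f : E → F} (hf : HasExpGrowth f)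
    (hf0 : f =o[𝓝 0] fun h => ‖h‖ ^ 2) :
    ∃ K a : ℝ, 0 ≤ K ∧ 0 ≤ a ∧ ∀ h, ‖f h‖ ≤ K * ‖h‖ ^ 2 * Real.exp (a * ‖h‖) := by
  obtain ⟨C, a, hC, ha, hfar⟩ := hf.exists_nonneg
  obtain ⟨δ, hδ, hnear⟩ := Metric.eventually_nhds_iff.1 (hf0.bound one_pos)
  refine ⟨1 + C / δ ^ 2, a, by positivity, ha, fun h => ?_⟩
  rcases lt_or_ge ‖h‖ δ with hlt | hge
  · calc ‖f h‖ ≤ 1 * ‖h‖ ^ 2 * 1 := by simpa using hnear (y := h) (by simpa using hlt)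
      _ ≤ (1 + C / δ ^ 2) * ‖h‖ ^ 2 * Real.exp (a * ‖h‖) := by
        gcongr
        · simpa using (by positivity : 0 ≤ C / δ ^ 2)
        · exact Real.one_le_exp (by positivity)
  · calc ‖f h‖ ≤ C / δ ^ 2 * δ ^ 2 * Real.exp (a * ‖h‖) := by
          rw [div_mul_cancel₀ _ (by positivity)]
          exact hfar h
      _ ≤ (1 + C / δ ^ 2) * ‖h‖ ^ 2 * Real.exp (a * ‖h‖) := by
        gcongr
        linarith

end HasExpGrowth

section ExpIntegrable

variable [MeasurableSpace E] {μ : Measure E}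

/-- `f` is integrable against `μ` with every exponential weight `exp (a * ‖y‖)`. For `f = 1` this
says that `μ` has exponential moments of all orders. -/
def ExpIntegrable [NormedSpace ℝ F] (f : E → F) (μ : Measure E) : Prop :=
  ∀ a : ℝ, Integrable (fun y => Real.exp (a * ‖y‖) • f y) μ

variable [NormedSpace ℝ F] [NormedSpace ℝ G]

namespace ExpIntegrable

lemma integrable {f : E → F} (hf : ExpIntegrable f μ) : Integrable f μ := by
  simpa using hf 0

lemma of_norm_le [OpensMeasurableSpace E] {f : E → F} {g : E → G} (hf : ExpIntegrable f μ)
    (hg : AEStronglyMeasurable g μ) {C a : ℝ}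
    (h : ∀ y, ‖g y‖ ≤ C * Real.exp (a * ‖y‖) * ‖f y‖) : ExpIntegrable g μ := by
  intro b
  refine ((hf (b + a)).norm.const_mul C).mono' ?_ (.of_forall fun y => ?_)
  · exact AEStronglyMeasurable.smul (by fun_prop) hg
  · calc ‖Real.exp (b * ‖y‖) • g y‖
        ≤ Real.exp (b * ‖y‖) * (C * Real.exp (a * ‖y‖) * ‖f y‖) := by
          rw [norm_smul, Real.norm_of_nonneg (Real.exp_nonneg _)]
          gcongr
          exact h y
      _ = C * ‖Real.exp ((b + a) * ‖y‖) • f y‖ := by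
          rw [norm_smul, Real.norm_of_nonneg (Real.exp_nonneg _), add_mul, Real.exp_add]
          ring

end ExpIntegrable

lemma HasExpGrowth.expIntegrable [OpensMeasurableSpace E] {f : E → F} (hf : HasExpGrowth f)
    (hfm : AEStronglyMeasurable f μ) (hμ : ExpIntegrable (fun _ => (1 : ℝ)) μ) :
    ExpIntegrable f μ := by
  obtain ⟨C, a, hf⟩ := hf
  exact hμ.of_norm_le hfm fun y => by simpa using hf y

lemma expIntegrable_one_of_isGaussian [NormedSpace ℝ E] [CompleteSpace E]
    [SecondCountableTopology E] [BorelSpace E] (μ : Measure E) [IsGaussian μ] :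
    ExpIntegrable (fun _ => (1 : ℝ)) μ := by
  intro a
  obtain ⟨C, hC, hint⟩ := IsGaussian.exists_integrable_exp_sq μ -- Fernique's theorem
  refine (hint.const_mul (Real.exp (a ^ 2 / (4 * C)))).mono' (by fun_prop)
    (.of_forall fun y => ?_)
  have hsq : a * ‖y‖ ≤ a ^ 2 / (4 * C) + C * ‖y‖ ^ 2 := by
    have hsquare : a ^ 2 / (4 * C) + C * ‖y‖ ^ 2 - a * ‖y‖ = (a - 2 * C * ‖y‖) ^ 2 / (4 * C) := by
      field_simp
      ring
    have hnonneg : 0 ≤ (a - 2 * C * ‖y‖) ^ 2 / (4 * C) := by positivity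
    linarith
  simpa [← Real.exp_add] using hsq

end ExpIntegrable

section LaplaceTransform

variable [InnerProductSpace ℝ E] [NormedSpace ℝ F]

lemma hasFDerivAt_exp_inner_smul (x y : E) (c : F) :
    HasFDerivAt (fun x => Real.exp ⟪x, y⟫_ℝ • c)
      (Real.exp ⟪x, y⟫_ℝ • (innerSL ℝ y).smulRight c) x := by
  have hinner : HasFDerivAt (fun x => ⟪x, y⟫_ℝ) (innerSL ℝ y) x :=
    (innerSL ℝ y).hasFDerivAt.congr_of_eventuallyEq
      (.of_forall fun x => (real_inner_comm x y).symm)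
  convert hinner.exp.smul_const c using 1
  ext w
  simp [mul_smul]

variable [MeasurableSpace E] [BorelSpace E] [SecondCountableTopology E] {μ : Measure E} {f : E → F}

namespace ExpIntegrable

lemma exp_inner_smul (hf : ExpIntegrable f μ) (x : E) :
    ExpIntegrable (fun y => Real.exp ⟪x, y⟫_ℝ • f y) μ := by
  refine hf.of_norm_le (C := 1) (a := ‖x‖) ?_ fun y => ?_
  · exact AEStronglyMeasurable.smul (by fun_prop) hf.integrable.aestronglyMeasurable
  · rw [norm_smul, Real.norm_of_nonneg (Real.exp_nonneg _), one_mul]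
    gcongr
    exact real_inner_le_norm x y

lemma innerSL_smulRight (hf : ExpIntegrable f μ) :
    ExpIntegrable (fun y => (innerSL ℝ y).smulRight (f y)) μ := by
  refine hf.of_norm_le (C := 1) (a := 1) ?_ fun y => ?_
  · have hcont : Continuous fun p : E × F => (innerSL ℝ p.1).smulRight p.2 := by
      have : Continuous fun p : E × F =>
        ContinuousLinearMap.smulRightL ℝ E F (innerSL ℝ p.1) p.2 := by fun_prop
      exact this
    exact hcont.comp_aestronglyMeasurable
      (aestronglyMeasurable_id.prodMk hf.integrable.aestronglyMeasurable)
  · rw [ContinuousLinearMap.norm_smulRight_apply, innerSL_apply_norm, one_mul, one_mul]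
    gcongr
    linarith [Real.add_one_le_exp ‖y‖]

end ExpIntegrable

lemma hasFDerivAt_integral_exp_inner_smul (hf : ExpIntegrable f μ) (x : E) :
    HasFDerivAt (fun x => ∫ y, Real.exp ⟪x, y⟫_ℝ • f y ∂μ)
      (∫ y, Real.exp ⟪x, y⟫_ℝ • (innerSL ℝ y).smulRight (f y) ∂μ) x := by
  refine hasFDerivAt_integral_of_dominated_of_fderiv_le
    (Metric.ball_mem_nhds x one_pos)
    (.of_forall fun z => (hf.exp_inner_smul z).integrable.aestronglyMeasurable)
    (hf.exp_inner_smul x).integrable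
    (hf.innerSL_smulRight.exp_inner_smul x).integrable.aestronglyMeasurable
    (.of_forall fun y z hz => ?_)
    (hf.innerSL_smulRight (‖x‖ + 1)).norm
    (.of_forall fun y z _ => hasFDerivAt_exp_inner_smul z y (f y))
  have hz : ‖z‖ ≤ ‖x‖ + 1 := by linarith [norm_sub_norm_le z x, mem_ball_iff_norm.1 hz]
  rw [norm_smul, norm_smul, Real.norm_of_nonneg (Real.exp_nonneg _),
    Real.norm_of_nonneg (Real.exp_nonneg _)]
  gcongr
  exact (real_inner_le_norm z y).trans (by gcongr)

lemma contDiff_integral_exp_inner_smul [FiniteDimensional ℝ E] (hf : ExpIntegrable f μ) :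
    ContDiff ℝ ∞ fun x => ∫ y, Real.exp ⟪x, y⟫_ℝ • f y ∂μ := by
  refine contDiff_infty.2 fun m => ?_
  induction m generalizing f with
  | zero =>
    exact contDiff_zero.2 <| continuous_iff_continuousAt.2 fun x =>
      (hasFDerivAt_integral_exp_inner_smul hf x).continuousAt
  | succ m ih =>
    rw [Nat.cast_add, Nat.cast_one]
    refine contDiff_succ_iff_fderiv_apply.2
      ⟨fun x => (hasFDerivAt_integral_exp_inner_smul hf x).differentiableAt, by simp, fun v => ?_⟩
    have hfv : ExpIntegrable (fun y => ⟪y, v⟫_ℝ • f y) μ := fun a => by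
      simpa using (hf.innerSL_smulRight a).apply_continuousLinearMap v
    convert ih hfv using 2 with x
    rw [(hasFDerivAt_integral_exp_inner_smul hf x).fderiv,
      ContinuousLinearMap.integral_apply (hf.innerSL_smulRight.exp_inner_smul x).integrable]
    simp

end LaplaceTransform

section MomentGeneratingFunction

variable [NormedSpace ℝ E] [MeasurableSpace E] [BorelSpace E] {μ ν : Measure E}

lemma ExpIntegrable.integrableExpSet_dual
    (hμ : ExpIntegrable (fun _ => (1 : ℝ)) μ) (L : StrongDual ℝ E) :
    integrableExpSet L μ = Set.univ := by
  refine Set.eq_univ_of_forall fun t => ?_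
  refine (hμ.of_norm_le (C := 1) (a := |t| * ‖L‖) (by fun_prop) fun y => ?_).integrable
  rw [Real.norm_of_nonneg (Real.exp_nonneg _), norm_one, one_mul, mul_one, mul_assoc]
  refine Real.exp_le_exp.2 ?_
  calc t * L y ≤ |t| * |L y| := (le_abs_self _).trans (abs_mul t (L y)).le
    _ ≤ |t| * (‖L‖ * ‖y‖) := by gcongr; exact L.le_opNorm y

lemma measure_ext_of_mgf_dual [SecondCountableTopology E] [CompleteSpace E]
    [IsProbabilityMeasure μ] [IsFiniteMeasure ν]
    (hμ : ∀ L : StrongDual ℝ E, 0 ∈ interior (integrableExpSet L μ))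
    (h : ∀ L : StrongDual ℝ E, mgf L μ = mgf L ν) : μ = ν := by
  refine Measure.ext_of_charFunDual (funext fun L => ?_)
  have hI := eqOn_complexMGF_of_mgf (h L) (x := Complex.I) (by simpa using hμ L)
  simpa only [complexMGF, charFunDual_apply, mul_comm Complex.I] using hI

end MomentGeneratingFunction

section CameronMartin

open InnerProductSpace (toDual)

variable [InnerProductSpace ℝ E] [FiniteDimensional ℝ E] [MeasurableSpace E] [BorelSpace E]

lemma mgf_dual_stdGaussian (L : StrongDual ℝ E) (t : ℝ) :
    mgf L (stdGaussian E) t = Real.exp (‖L‖ ^ 2 * t ^ 2 / 2) := by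
  have hlaw := IsGaussian.map_eq_gaussianReal (μ := stdGaussian E) L
  rw [integral_strongDual_stdGaussian, variance_dual_stdGaussian] at hlaw
  rw [mgf_gaussianReal hlaw]
  simp

lemma integral_exp_inner_stdGaussian (v : E) :
    ∫ z, Real.exp ⟪v, z⟫_ℝ ∂stdGaussian E = Real.exp (‖v‖ ^ 2 / 2) := by
  simpa [mgf] using mgf_dual_stdGaussian (innerSL ℝ v) 1

lemma integrable_exp_inner_stdGaussian (v : E) :
    Integrable (fun z => Real.exp ⟪v, z⟫_ℝ) (stdGaussian E) := by
  simpa using ((expIntegrable_one_of_isGaussian _).exp_inner_smul v).integrable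

lemma stdGaussian_map_const_add (x : E) :
    (stdGaussian E).map (x + ·) = (stdGaussian E).tilted fun z => ⟪x, z⟫_ℝ := by
  have : IsProbabilityMeasure ((stdGaussian E).tilted fun z => ⟪x, z⟫_ℝ) :=
    isProbabilityMeasure_tilted (integrable_exp_inner_stdGaussian x)
  refine measure_ext_of_mgf_dual (fun L => ?_) fun L => funext fun t => ?_
  · rw [(expIntegrable_one_of_isGaussian _).integrableExpSet_dual L]
    simp
  · obtain ⟨v, rfl⟩ := (toDual ℝ E).surjective L
    have hleft : mgf (toDual ℝ E v) ((stdGaussian E).map (x + ·)) t =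
        Real.exp (t * ⟪v, x⟫_ℝ) * Real.exp (‖v‖ ^ 2 * t ^ 2 / 2) := by
      rw [mgf_map (by fun_prop) (by fun_prop), ← LinearIsometryEquiv.norm_map (toDual ℝ E) v,
        ← mgf_dual_stdGaussian, ← mgf_const_add]
      simp [Function.comp_def, inner_add_right]
    have hright : mgf (toDual ℝ E v) ((stdGaussian E).tilted fun z => ⟪x, z⟫_ℝ) t =
        Real.exp (‖x + t • v‖ ^ 2 / 2) / Real.exp (‖x‖ ^ 2 / 2) := by
      rw [mgf, integral_exp_tilted, integral_exp_inner_stdGaussian x,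
        ← integral_exp_inner_stdGaussian (x + t • v)]
      simp [inner_add_left, inner_smul_left]
    rw [hleft, hright, ← Real.exp_add, ← Real.exp_sub, norm_add_sq_real, inner_smul_right,
      norm_smul, real_inner_comm]
    congr 1
    rw [mul_pow, Real.norm_eq_abs, sq_abs]
    ring

lemma integral_const_add_stdGaussian [NormedSpace ℝ F] (f : E → F) (x : E) :
    ∫ z, f (x + z) ∂stdGaussian E =
      Real.exp (-(‖x‖ ^ 2 / 2)) • ∫ z, Real.exp ⟪x, z⟫_ℝ • f z ∂stdGaussian E := by
  calc ∫ z, f (x + z) ∂stdGaussian E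
      = ∫ z, f z ∂((stdGaussian E).tilted fun z => ⟪x, z⟫_ℝ) := by
        rw [← stdGaussian_map_const_add, (measurableEmbedding_addLeft x).integral_map]
    _ = _ := by
        rw [integral_tilted, integral_exp_inner_stdGaussian, ← integral_smul]
        simp only [smul_smul, Real.exp_neg, div_eq_inv_mul]

lemma contDiff_of_integral_const_add_stdGaussian_eq [NormedSpace ℝ F] {u : E → F}
    (hu : AEStronglyMeasurable u (stdGaussian E)) (hgrowth : HasExpGrowth u)
    (hmean : ∀ x, ∫ z, u (x + z) ∂stdGaussian E = u x) : ContDiff ℝ ∞ u := by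
  have hlaplace := contDiff_integral_exp_inner_smul
    (hgrowth.expIntegrable hu (expIntegrable_one_of_isGaussian _))
  have hu_eq : u = fun x =>
      Real.exp (-(‖x‖ ^ 2 / 2)) • ∫ z, Real.exp ⟪x, z⟫_ℝ • u z ∂stdGaussian E :=
    funext fun x => (hmean x).symm.trans (integral_const_add_stdGaussian u x)
  rw [hu_eq]
  exact ((contDiff_norm_sq ℝ).div_const 2).neg.exp.smul hlaplace

end CameronMartin

section Taylor

variable [NormedSpace ℝ E] [NormedSpace ℝ F] {u : E → F} {x : E}

/-- The remainder at the increment `h` of the second-order Taylor expansion of `u` at `x`. -/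
noncomputable def taylorRemainder (u : E → F) (x h : E) : F :=
  u (x + h) - u x - fderiv ℝ u x h - (1 / 2 : ℝ) • fderiv ℝ (fderiv ℝ u) x h h

lemma taylorRemainder_zero (u : E → F) (x : E) : taylorRemainder u x 0 = 0 := by
  simp [taylorRemainder]

lemma hasFDerivAt_taylorRemainder (hu : Differentiable ℝ u)
    (hu' : DifferentiableAt ℝ (fderiv ℝ u) x) (h : E) :
    HasFDerivAt (taylorRemainder u x)
      (fderiv ℝ u (x + h) - fderiv ℝ u x - fderiv ℝ (fderiv ℝ u) x h) h := by
  set B := fderiv ℝ (fderiv ℝ u) x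
  have hsymm (v w : E) : B v w = B w v :=
    second_derivative_symmetric (fun y => (hu y).hasFDerivAt) hu'.hasFDerivAt v w
  have hshift : HasFDerivAt (fun h => u (x + h)) (fderiv ℝ u (x + h)) h :=
    (hasFDerivAt_comp_add_left x).2 (hu (x + h)).hasFDerivAt
  have hquad : HasFDerivAt (fun h => (1 / 2 : ℝ) • B h h) (B h) h := by
    refine ((B.hasFDerivAt.clm_apply (hasFDerivAt_id h)).const_smul (1 / 2 : ℝ)).congr_fderiv ?_
    ext w
    simp [hsymm w h, ← two_smul ℝ]
  exact ((hshift.sub_const (u x)).sub (fderiv ℝ u x).hasFDerivAt).sub hquad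

lemma isLittleO_taylorRemainder (hu : Differentiable ℝ u)
    (hu' : DifferentiableAt ℝ (fderiv ℝ u) x) :
    taylorRemainder u x =o[𝓝 0] fun h => ‖h‖ ^ 2 := by
  have hderiv : (fun h => fderiv ℝ u (x + h) - fderiv ℝ u x - fderiv ℝ (fderiv ℝ u) x h)
      =o[𝓝[Set.univ] 0] fun h => ‖h - 0‖ ^ 1 := by
    simpa using (hasFDerivAt_iff_isLittleO_nhds_zero.1 hu'.hasFDerivAt).norm_right
  simpa [taylorRemainder_zero] using convex_univ.isLittleO_pow_succ (Set.mem_univ 0)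
    (fun h _ => (hasFDerivAt_taylorRemainder hu hu' h).hasFDerivWithinAt) hderiv

lemma HasExpGrowth.taylorRemainder (hu : HasExpGrowth u) (x : E) :
    HasExpGrowth (taylorRemainder u x) := by
  have hshift : HasExpGrowth fun h => u (x + h) := by simpa using hu.comp_add_smul x 1
  exact ((hshift.sub (.const (u x))).sub (.clm _)).sub
    (.clm_apply_self ((1 / 2 : ℝ) • fderiv ℝ (fderiv ℝ u) x))

section Integral

variable [MeasurableSpace E] [OpensMeasurableSpace E] [SecondCountableTopology E] {μ : Measure E}

lemma tendsto_integral_inv_sq_smul_comp_smul (hμ : ExpIntegrable (fun _ => (1 : ℝ)) μ) {f : E → F}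
    (hf : Continuous f) (hgrowth : HasExpGrowth f) (hf0 : f =o[𝓝 0] fun h => ‖h‖ ^ 2) :
    Tendsto (fun s : ℝ => ∫ z, (s ^ 2)⁻¹ • f (s • z) ∂μ) (𝓝[≠] 0) (𝓝 0) := by
  obtain ⟨K, a, hK, ha, hbound⟩ := hgrowth.exists_norm_le_sq_mul_exp hf0
  have hpointwise (z : E) :
      Tendsto (fun s : ℝ => (s ^ 2)⁻¹ • f (s • z)) (𝓝[≠] 0) (𝓝 0) := by
    have hsmul : Tendsto (fun s : ℝ => s • z) (𝓝[≠] 0) (𝓝 0) :=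
      ((continuous_id.smul continuous_const).tendsto' 0 0 (zero_smul ℝ z)).mono_left
        nhdsWithin_le_nhds
    refine IsLittleO.tendsto_inv_smul_nhds_zero ?_
    refine (hf0.comp_tendsto hsmul).trans_isBigO (.of_bound (‖z‖ ^ 2) (.of_forall fun s => ?_))
    simp [norm_smul, mul_pow, mul_comm]
  have hdom : Integrable (fun z => K * (Real.exp (a * ‖z‖) • ‖z‖ ^ 2)) μ :=
    ((HasExpGrowth.of_norm_le_pow (f := fun z : E => ‖z‖ ^ 2) (C := 1) (k := 2)
      fun z => by simp).expIntegrable (by fun_prop) hμ a).const_mul K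
  rw [← integral_zero E F (μ := μ)]
  refine tendsto_integral_filter_of_dominated_convergence _ ?_ ?_ hdom
    (.of_forall hpointwise)
  · exact .of_forall fun s => Continuous.aestronglyMeasurable (by fun_prop)
  · have hsmall : ∀ᶠ s : ℝ in 𝓝[≠] 0, |s| ≤ 1 :=
      nhdsWithin_le_nhds <| (continuous_abs.tendsto' 0 0 abs_zero).eventually_le_const one_pos
    filter_upwards [hsmall, self_mem_nhdsWithin] with s hs (hs0 : s ≠ 0)
    refine .of_forall fun z => ?_
    calc ‖(s ^ 2)⁻¹ • f (s • z)‖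
        ≤ (s ^ 2)⁻¹ * (K * ‖s • z‖ ^ 2 * Real.exp (a * ‖s • z‖)) := by
          rw [norm_smul, Real.norm_of_nonneg (by positivity)]
          gcongr
          exact hbound _
      _ = K * (Real.exp (a * (|s| * ‖z‖)) • ‖z‖ ^ 2) := by
          rw [norm_smul, mul_pow, Real.norm_eq_abs, sq_abs, smul_eq_mul]
          field_simp
      _ ≤ K * (Real.exp (a * ‖z‖) • ‖z‖ ^ 2) := by
          gcongr
          exact mul_le_of_le_one_left (norm_nonneg z) hs

lemma integral_comp_add_smul_eq [CompleteSpace E] [CompleteSpace F] [IsProbabilityMeasure μ]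
    (hμ : ExpIntegrable (fun _ => (1 : ℝ)) μ) (hcenter : ∫ z, z ∂μ = 0)
    (hu : Continuous u) (hgrowth : HasExpGrowth u) (x : E) (s : ℝ) :
    ∫ z, u (x + s • z) ∂μ = u x + (s ^ 2 / 2) • ∫ z, fderiv ℝ (fderiv ℝ u) x z z ∂μ
      + ∫ z, taylorRemainder u x (s • z) ∂μ := by
  set L := fderiv ℝ u x with hL
  set B := fderiv ℝ (fderiv ℝ u) x with hB
  have hid : Integrable (fun z : E => z) μ :=
    ((HasExpGrowth.clm (.id ℝ E)).expIntegrable (by fun_prop) hμ).integrable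
  have hlinear : ∫ z, s • L z ∂μ = 0 := by
    rw [integral_smul, L.integral_comp_comm hid, hcenter, map_zero, smul_zero]
  have hLint : Integrable (fun z => s • L z) μ := (L.integrable_comp hid).smul s
  have hBint : Integrable (fun z => (s ^ 2 / 2) • B z z) μ :=
    ((HasExpGrowth.clm_apply_self B).expIntegrable (by fun_prop) hμ).integrable.smul (s ^ 2 / 2)
  have huint : Integrable (fun z => u (x + s • z)) μ :=
    ((hgrowth.comp_add_smul x s).expIntegrable (by fun_prop) hμ).integrable
  have hincr : Integrable (fun z => u (x + s • z) - u x) μ := huint.sub (integrable_const _)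
  have hlin : Integrable (fun z => u (x + s • z) - u x - s • L z) μ := hincr.sub hLint
  have hpointwise (z : E) : taylorRemainder u x (s • z) =
      u (x + s • z) - u x - s • L z - (s ^ 2 / 2) • B z z := by
    simp only [taylorRemainder, map_smul, smul_apply, ← hL, ← hB]
    module
  have hremainder : ∫ z, taylorRemainder u x (s • z) ∂μ =
      ∫ z, u (x + s • z) ∂μ - u x - (s ^ 2 / 2) • ∫ z, B z z ∂μ := by
    simp only [hpointwise]
    rw [integral_sub hlin hBint, integral_sub hincr hLint,
      integral_sub huint (integrable_const _), hlinear, integral_smul]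
    simp
  rw [hremainder]
  abel

lemma tendsto_integral_second_difference [CompleteSpace E] [CompleteSpace F]
    [IsProbabilityMeasure μ] (hμ : ExpIntegrable (fun _ => (1 : ℝ)) μ) (hcenter : ∫ z, z ∂μ = 0)
    (hu : Differentiable ℝ u) (hu' : DifferentiableAt ℝ (fderiv ℝ u) x) (hgrowth : HasExpGrowth u) :
    Tendsto (fun s : ℝ => (s ^ 2)⁻¹ • (∫ z, u (x + s • z) ∂μ - u x)) (𝓝[≠] 0)
      (𝓝 ((1 / 2 : ℝ) • ∫ z, fderiv ℝ (fderiv ℝ u) x z z ∂μ)) := by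
  have hcont : Continuous u := hu.continuous
  have hremainder := tendsto_integral_inv_sq_smul_comp_smul hμ (by unfold taylorRemainder; fun_prop)
    (hgrowth.taylorRemainder x) (isLittleO_taylorRemainder hu hu')
  have hlimit := hremainder.const_add ((1 / 2 : ℝ) • ∫ z, fderiv ℝ (fderiv ℝ u) x z z ∂μ)
  rw [add_zero] at hlimit
  refine hlimit.congr' ?_
  filter_upwards [self_mem_nhdsWithin] with s (hs : s ≠ 0)
  rw [integral_comp_add_smul_eq hμ hcenter hcont hgrowth, add_assoc, add_sub_cancel_left, smul_add,
    integral_smul, smul_smul]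
  congr 2
  field_simp

end Integral

end Taylor

section Harmonic

variable [InnerProductSpace ℝ E] [FiniteDimensional ℝ E] [MeasurableSpace E] [BorelSpace E]

lemma integral_inner_mul_inner_stdGaussian (v w : E) :
    ∫ z, ⟪v, z⟫_ℝ * ⟪w, z⟫_ℝ ∂stdGaussian E = ⟪v, w⟫_ℝ := by
  have hcov := covarianceBilin_apply (μ := stdGaussian E) IsGaussian.memLp_two_id v w
  rw [covarianceBilin_stdGaussian, innerSL_apply_apply] at hcov
  simpa using hcov.symm

variable [NormedSpace ℝ F] [CompleteSpace F]

lemma integral_apply_self_stdGaussian {ι : Type*} [Fintype ι] (b : OrthonormalBasis ι ℝ E)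
    (B : E →L[ℝ] E →L[ℝ] F) : ∫ z, B z z ∂stdGaussian E = ∑ i, B (b i) (b i) := by
  have hexpand (z : E) : B z z = ∑ i, ∑ j, (⟪b i, z⟫_ℝ * ⟪b j, z⟫_ℝ) • B (b j) (b i) := by
    conv_lhs => rw [← b.sum_repr' z]
    simp only [map_sum, map_smul, _root_.sum_apply, _root_.smul_apply, Finset.smul_sum, mul_smul]
  have hint (i j : ι) :
      Integrable (fun z => (⟪b i, z⟫_ℝ * ⟪b j, z⟫_ℝ) • B (b j) (b i)) (stdGaussian E) := by
    refine Integrable.smul_const ?_ _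
    have hgrowth := HasExpGrowth.clm_apply_self ((innerSL ℝ (b i)).smulRight (innerSL ℝ (b j)))
    exact (hgrowth.expIntegrable (by fun_prop) (expIntegrable_one_of_isGaussian _)).integrable
  classical
  calc ∫ z, B z z ∂stdGaussian E
      = ∑ i, ∑ j, ⟪b i, b j⟫_ℝ • B (b j) (b i) := by
        simp only [hexpand]
        rw [integral_finsetSum _ fun i _ => integrable_finsetSum _ fun j _ => hint i j]
        refine Finset.sum_congr rfl fun i _ => ?_
        rw [integral_finsetSum _ fun j _ => hint i j]
        simp only [integral_smul_const, integral_inner_mul_inner_stdGaussian]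
    _ = ∑ i, B (b i) (b i) := by simp [b.inner_eq_ite]

lemma integral_fderiv_fderiv_stdGaussian (u : E → F) (x : E) :
    ∫ z, fderiv ℝ (fderiv ℝ u) x z z ∂stdGaussian E = Δ u x := by
  rw [integral_apply_self_stdGaussian (stdOrthonormalBasis ℝ E),
    InnerProductSpace.laplacian_eq_iteratedFDeriv_stdOrthonormalBasis]
  simp [iteratedFDeriv_two_apply]

lemma laplacian_eq_zero_of_frequently_integral_eq {u : E → F} {x : E} (hu : Differentiable ℝ u)
    (hu' : DifferentiableAt ℝ (fderiv ℝ u) x) (hgrowth : HasExpGrowth u)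
    (hmean : ∃ᶠ s : ℝ in 𝓝[≠] 0, ∫ z, u (x + s • z) ∂stdGaussian E = u x) : Δ u x = 0 := by
  have hlimit := tendsto_integral_second_difference
    (expIntegrable_one_of_isGaussian (stdGaussian E)) integral_id_stdGaussian hu hu' hgrowth
  rw [integral_fderiv_fderiv_stdGaussian] at hlimit
  have hzero : ∃ᶠ s : ℝ in 𝓝[≠] 0,
      (s ^ 2)⁻¹ • (∫ z, u (x + s • z) ∂stdGaussian E - u x) ∈ ({0} : Set F) :=
    hmean.mono fun s hs => by simp [hs]
  have hhalf := isClosed_singleton.mem_of_frequently_of_tendsto hzero hlimit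
  simpa using hhalf

theorem gaussian_mean_value_implies_harmonic_general {u : E → F}
    (hu : AEStronglyMeasurable u (stdGaussian E)) (hgrowth : HasExpGrowth u)
    (hmean : ∀ x, ∫ z, u (x + z) ∂stdGaussian E = u x)
    (hmean_small : ∀ x, ∃ᶠ s : ℝ in 𝓝[≠] 0, ∫ z, u (x + s • z) ∂stdGaussian E = u x) :
    ContDiff ℝ ∞ u ∧ ∀ x, Δ u x = 0 := by
  have hsmooth : ContDiff ℝ ∞ u := contDiff_of_integral_const_add_stdGaussian_eq hu hgrowth hmean
  have hderiv : ContDiff ℝ ∞ (fderiv ℝ u) := hsmooth.fderiv_right (by simp)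
  exact ⟨hsmooth, fun x => laplacian_eq_zero_of_frequently_integral_eq
    (hsmooth.differentiable (by simp)) (hderiv.differentiable (by simp) x) hgrowth (hmean_small x)⟩

end Harmonic

section EuclideanSpace

variable {n : ℕ}

lemma gaussianReal_eq_map_gaussianReal (m : ℝ) (t : ℝ≥0) :
    gaussianReal m t = (gaussianReal 0 1).map (fun z => m + √t * z) := by
  rw [← Function.comp_def (m + ·) (√t * ·), ← Measure.map_map (by fun_prop) (by fun_prop),
    gaussianReal_map_const_mul, gaussianReal_map_const_add]
  congr 1
  · simp
  · ext
    simp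

lemma gaussN_eq_map_stdGaussian (x : En n) (t : ℝ≥0) :
    gaussN x t = (stdGaussian (En n)).map (fun z => x + √t • z) := by
  rw [gaussN, ← map_pi_eq_stdGaussian,
    Measure.map_map (f := WithLp.toLp 2) (by fun_prop) (by fun_prop)]
  simp only [gaussianReal_eq_map_gaussianReal (x _) t]
  rw [← Measure.pi_map_pi (fun i => by fun_prop), Measure.map_map (by fun_prop) (by fun_prop)]
  congr 1

lemma integral_gaussN_s8 [NormedSpace ℝ F] {f : En n → F} (x : En n) (t : ℝ≥0)
    (hf : AEStronglyMeasurable f (gaussN x t)) :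
    ∫ y, f y ∂gaussN x t = ∫ z, f (x + √t • z) ∂stdGaussian (En n) := by
  rw [gaussN_eq_map_stdGaussian] at hf ⊢
  exact integral_map (by fun_prop) hf

lemma laplacian_eq_laplacian {u : En n → ℝ} {y : En n} (hu : DifferentiableAt ℝ (fderiv ℝ u) y) :
    laplacian u y = Δ u y := by
  rw [InnerProductSpace.laplacian_eq_iteratedFDeriv_orthonormalBasis u
    (EuclideanSpace.basisFun (Fin n) ℝ)]
  refine Finset.sum_congr rfl fun i _ => ?_
  rw [fderiv_clm_apply hu (by fun_prop)]
  simp [iteratedFDeriv_two_apply, ee]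

end EuclideanSpace

/-- **Converse of the Gaussian mean value property.**
If `u : ℝⁿ → ℝ` is continuous, of polynomial growth, and `∫ u dN(x, t·Id) = u(x)` for
every `x ∈ ℝⁿ` and `t > 0`, then `u` is infinitely differentiable and harmonic. -/
theorem gaussian_mean_value_implies_harmonic {n : ℕ} (hn : 1 ≤ n)
    (u : En n → ℝ) (hu : Continuous u)
    (hgrowth : ∃ C > 0, ∃ k : ℕ, ∀ y, |u y| ≤ C * (1 + ‖y‖ ^ k))
    (hmean : ∀ (x : En n) (t : ℝ) (ht : 0 < t), ∫ y, u y ∂(gaussN x ⟨t, ht.le⟩) = u x) :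
    ContDiff ℝ (⊤ : ℕ∞) u ∧ ∀ y, laplacian u y = 0 := by
  obtain ⟨C, -, k, hC⟩ := hgrowth
  have hmean_std (x : En n) (s : ℝ) (hs : 0 < s) :
      ∫ z, u (x + s • z) ∂stdGaussian (En n) = u x := by
    have hgauss : ∫ y, u y ∂gaussN x ⟨s ^ 2, sq_nonneg s⟩ =
        ∫ z, u (x + √(s ^ 2) • z) ∂stdGaussian (En n) :=
      integral_gaussN_s8 x _ hu.aestronglyMeasurable
    rw [Real.sqrt_sq hs.le] at hgauss
    exact hgauss.symm.trans (hmean x (s ^ 2) (by positivity))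
  have hmean_pos (x : En n) :
      ∀ᶠ s : ℝ in 𝓝[>] 0, ∫ z, u (x + s • z) ∂stdGaussian (En n) = u x :=
    eventually_mem_nhdsWithin.mono (hmean_std x)
  obtain ⟨hsmooth, hharmonic⟩ := gaussian_mean_value_implies_harmonic_general
    hu.aestronglyMeasurable (HasExpGrowth.of_norm_le_one_add_pow hC)
    (fun x => by simpa using hmean_std x 1 one_pos)
    (fun x => (hmean_pos x).frequently.filter_mono (nhdsGT_le_nhdsNE 0))
  have hderiv : ContDiff ℝ ∞ (fderiv ℝ u) := hsmooth.fderiv_right (by simp)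
  exact ⟨hsmooth, fun y =>
    (laplacian_eq_laplacian (hderiv.differentiable (by simp) y)).trans (hharmonic y)⟩
end
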